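/- arXiv:1208.5408 — 2 statements merged into one kernel-verified Lean document; each statement's English description precedes it below -/
import Mathlib

section
/- Let μ be a probability measure on [0,2π) with Fourier coefficients a_k = (1/π)E[cos(kX_μ)], b_k = (1/π)E[sin(kX_μ)], and suppose a_1 = b_1 = 0. Then the area of the associated convex set satisfies A(μ) = 1/(4π) − (π/2) Σ_{k≥2} (a_k² + b_k²)/(k²−1). In particular A(μ) ≤ 1/(4π), with equality iff μ is the uniform measure on [0,2π]. -/
open MeasureTheory Real Set

/-- Cumulative distribution function `F_μ(x) = μ([0,x])`. -/
noncomputable def cdf' (μ : Measure ℝ) (x : ℝ) : ℝ := (μ (Set.Icc 0 x)).toReal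

/-- Generalized inverse `F_μ⁻¹(y) = inf {x ≥ 0 : F_μ(x) ≥ y}`. -/
noncomputable def qf (μ : Measure ℝ) (y : ℝ) : ℝ := sInf {x : ℝ | 0 ≤ x ∧ y ≤ cdf' μ x}

/-- The curve `Z_μ(t) = ∫₀^t exp(i F_μ⁻¹(u)) du`. -/
noncomputable def Zc (μ : Measure ℝ) (t : ℝ) : ℂ :=
  ∫ u in (0:ℝ)..t, Complex.exp (Complex.I * (qf μ u))

/-- Fourier coefficient `a_k(μ) = (1/π) E[cos(k X_μ)]`. -/
noncomputable def aF (μ : Measure ℝ) (k : ℕ) : ℝ := (1/π) * ∫ x, Real.cos (k * x) ∂μ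

/-- Fourier coefficient `b_k(μ) = (1/π) E[sin(k X_μ)]`. -/
noncomputable def bF (μ : Measure ℝ) (k : ℕ) : ℝ := (1/π) * ∫ x, Real.sin (k * x) ∂μ

/-- Hurwitz area: `A(μ) = 1/(4π) − (π/2) Σ_{k≥2} (a_k² + b_k²)/(k²−1)`. -/
noncomputable def areaH (μ : Measure ℝ) : ℝ :=
  1/(4*π) - (π/2) * ∑' k : ℕ, (aF μ (k+2)^2 + bF μ (k+2)^2) / (((k:ℝ)+2)^2 - 1)

/-- Green's-theorem area of the region bounded by the curve . -/
noncomputable def areaG (μ : Measure ℝ) : ℝ :=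
  ∫ t in (0:ℝ)..1, (Zc μ t).re * Real.sin (qf μ t)


theorem cdf'_mono (μ : Measure ℝ) [IsProbabilityMeasure μ] : Monotone (cdf' μ) := fun _ _ h =>
  ENNReal.toReal_mono (measure_ne_top _ _) (measure_mono (Icc_subset_Icc_right h))

theorem measure_Iio_zero_of_support {μ : Measure ℝ} (hsupp : μ (Set.Ico 0 (2*π))ᶜ = 0) :
    μ (Iio 0) = 0 :=
  measure_mono_null (fun _ (hx : _ < 0) (hx' : _ ∈ Ico 0 (2*π)) => hx.not_ge hx'.1) hsupp

theorem cdf'_eq_cdf {μ : Measure ℝ} [IsProbabilityMeasure μ]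
    (hsupp : μ (Set.Ico 0 (2*π))ᶜ = 0) (x : ℝ) : cdf' μ x = ProbabilityTheory.cdf μ x := by
  rw [ProbabilityTheory.cdf_eq_real, Measure.real, cdf']
  congr 1
  refine le_antisymm (measure_mono fun y hy => hy.2) ?_
  calc μ (Iic x) ≤ μ (Icc 0 x ∪ Iio 0) := measure_mono fun y hy => by
        rcases lt_or_ge y 0 with h | h
        · exact Or.inr h
        · exact Or.inl ⟨h, hy⟩
    _ ≤ μ (Icc 0 x) + μ (Iio 0) := measure_union_le _ _
    _ = μ (Icc 0 x) := by rw [measure_Iio_zero_of_support hsupp, add_zero]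

theorem cdf'_two_pi {μ : Measure ℝ} [IsProbabilityMeasure μ]
    (hsupp : μ (Set.Ico 0 (2*π))ᶜ = 0) : cdf' μ (2*π) = 1 := by
  have h1 : μ (Ico 0 (2*π)) = 1 := (prob_compl_eq_zero_iff measurableSet_Ico).1 hsupp
  have : μ (Icc 0 (2*π)) = 1 := le_antisymm prob_le_one (h1 ▸ measure_mono Ico_subset_Icc_self)
  simp [cdf', this]

theorem qf_nonneg (μ : Measure ℝ) (y : ℝ) : 0 ≤ qf μ y := Real.sInf_nonneg fun _ hx => hx.1

theorem qf_le_iff {μ : Measure ℝ} [IsProbabilityMeasure μ]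
    (hsupp : μ (Set.Ico 0 (2*π))ᶜ = 0) {y x : ℝ} (hy : y ≤ 1) (hx : 0 ≤ x) :
    qf μ y ≤ x ↔ y ≤ cdf' μ x := by
  have hbdd : BddBelow {x : ℝ | 0 ≤ x ∧ y ≤ cdf' μ x} := ⟨0, fun _ h => h.1⟩
  have hne : {x : ℝ | 0 ≤ x ∧ y ≤ cdf' μ x}.Nonempty :=
    ⟨2*π, by positivity, by rwa [cdf'_two_pi hsupp]⟩
  refine ⟨fun h => ?_, fun h => csInf_le hbdd ⟨hx, h⟩⟩
  have hlt : ∀ z, x < z → y ≤ ProbabilityTheory.cdf μ z := fun z hz => by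
    obtain ⟨w, hw, hwz⟩ := exists_lt_of_csInf_lt hne (h.trans_lt hz)
    rw [← cdf'_eq_cdf hsupp]
    exact hw.2.trans (cdf'_mono μ hwz.le)
  rw [cdf'_eq_cdf hsupp]
  have hc := ((ProbabilityTheory.cdf μ).right_continuous x).mono Ioi_subset_Ici_self
  exact ge_of_tendsto hc (eventually_nhdsWithin_of_forall hlt)

theorem qf_monotoneOn {μ : Measure ℝ} [IsProbabilityMeasure μ]
    (hsupp : μ (Set.Ico 0 (2*π))ᶜ = 0) : MonotoneOn (qf μ) (Ioc 0 1) := fun y hy z hz hyz => by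
  rw [qf_le_iff hsupp hy.2 (qf_nonneg μ z)]
  exact hyz.trans ((qf_le_iff hsupp hz.2 (qf_nonneg μ z)).1 le_rfl)

theorem aemeasurable_qf {μ : Measure ℝ} [IsProbabilityMeasure μ]
    (hsupp : μ (Set.Ico 0 (2*π))ᶜ = 0) : AEMeasurable (qf μ) (volume.restrict (Ioc 0 1)) :=
  aemeasurable_restrict_of_monotoneOn measurableSet_Ioc (qf_monotoneOn hsupp)

instance isProbabilityMeasure_restrict_Ioc_zero_one :
    IsProbabilityMeasure ((volume : Measure ℝ).restrict (Ioc 0 1)) := ⟨by simp⟩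

/-- The quantile function pushes Lebesgue measure on `(0, 1]` to `μ`. -/
theorem map_qf {μ : Measure ℝ} [IsProbabilityMeasure μ]
    (hsupp : μ (Set.Ico 0 (2*π))ᶜ = 0) : (volume.restrict (Ioc 0 1)).map (qf μ) = μ := by
  have : IsProbabilityMeasure ((volume.restrict (Ioc 0 1)).map (qf μ)) :=
    Measure.isProbabilityMeasure_map (aemeasurable_qf hsupp)
  refine Measure.ext_of_Iic _ _ fun x => ?_
  rw [Measure.map_apply_of_aemeasurable (aemeasurable_qf hsupp) measurableSet_Iic,
    Measure.restrict_apply' measurableSet_Ioc]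
  rcases lt_or_ge x 0 with hx | hx
  · rw [measure_mono_null (Iic_subset_Iio.2 hx) (measure_Iio_zero_of_support hsupp)]
    convert! measure_empty (μ := (volume : Measure ℝ))
    ext y
    simp only [mem_inter_iff, mem_preimage, mem_Iic, mem_empty_iff_false, iff_false]
    exact fun h => absurd (h.1.trans_lt hx) (not_lt.2 (qf_nonneg μ y))
  · have h1 : qf μ ⁻¹' Iic x ∩ Ioc 0 1 = Ioc 0 (cdf' μ x) := by
      ext y
      simp only [mem_inter_iff, mem_preimage, mem_Iic, mem_Ioc]
      have hle : cdf' μ x ≤ 1 := by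
        rw [cdf'_eq_cdf hsupp]; exact ProbabilityTheory.cdf_le_one μ x
      constructor
      · rintro ⟨h, h0, h1⟩
        exact ⟨h0, (qf_le_iff hsupp h1 hx).1 h⟩
      · rintro ⟨h0, h⟩
        exact ⟨(qf_le_iff hsupp (h.trans hle) hx).2 h, h0, h.trans hle⟩
    rw [h1, Real.volume_Ioc, sub_zero, cdf'_eq_cdf hsupp, ProbabilityTheory.ofReal_cdf]

theorem integral_primitive_mul_eq_neg {c s : ℝ → ℝ} (hc : IntegrableOn c (Ioc 0 1))
    (hs : IntegrableOn s (Ioc 0 1)) (hs0 : ∫ u in Ioc 0 1, s u = 0) :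
    ∫ t in Ioc 0 1, (∫ u in (0:ℝ)..t, c u) * s t = - ∫ t in Ioc 0 1, (∫ u in (0:ℝ)..t, s u) * c t := by
  have hint : Integrable (Function.uncurry fun t u : ℝ => if u ≤ t then s t * c u else 0)
      ((volume.restrict (Ioc 0 1)).prod (volume.restrict (Ioc 0 1))) := by
    have h := (hs.mul_prod hc).indicator (s := {p : ℝ × ℝ | p.2 ≤ p.1})
      (measurableSet_le measurable_snd measurable_fst)
    refine h.congr (Filter.Eventually.of_forall fun p => ?_)
    simp [Function.uncurry, Set.indicator]
  have hswap := integral_integral_swap hint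
  have hleft : ∀ t ∈ Ioc (0:ℝ) 1, ∫ u in Ioc 0 1, (if u ≤ t then s t * c u else 0)
      = (∫ u in (0:ℝ)..t, c u) * s t := fun t ht => by
    rw [intervalIntegral.integral_of_le ht.1.le, mul_comm, ← integral_const_mul,
      ← integral_indicator measurableSet_Ioc, ← integral_indicator measurableSet_Ioc]
    congr 1 with u
    simp only [indicator, mem_Ioc]
    by_cases h0 : 0 < u <;> by_cases h1 : u ≤ t
    · simp [h0, h1, h1.trans ht.2]
    all_goals simp [h0, h1]
  have hright : ∀ u ∈ Ioc (0:ℝ) 1, ∫ t in Ioc 0 1, (if u ≤ t then s t * c u else 0)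
      = - ((∫ t in (0:ℝ)..u, s t) * c u) := fun u hu => by
    have hsplit : ∫ t in (0:ℝ)..u, s t = - ∫ t in Ioc u 1, s t := by
      have h1 : IntervalIntegrable s volume 0 u :=
        (intervalIntegrable_iff_integrableOn_Ioc_of_le hu.1.le).2
          (hs.mono_set (Ioc_subset_Ioc_right hu.2))
      have h2 : IntervalIntegrable s volume u 1 :=
        (intervalIntegrable_iff_integrableOn_Ioc_of_le hu.2).2
          (hs.mono_set (Ioc_subset_Ioc_left hu.1.le))
      have h3 := intervalIntegral.integral_add_adjacent_intervals h1 h2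
      rw [intervalIntegral.integral_of_le zero_le_one, hs0, intervalIntegral.integral_of_le hu.2] at h3
      linarith
    rw [hsplit, neg_mul, neg_neg, mul_comm, ← integral_const_mul, ← integral_Icc_eq_integral_Ioc (x := u),
      ← integral_indicator measurableSet_Icc, ← integral_indicator measurableSet_Ioc]
    congr 1 with t
    simp only [indicator, mem_Ioc, mem_Icc]
    by_cases h0 : u ≤ t <;> by_cases h1 : t ≤ 1
    · simp [h0, h1, hu.1.trans_le h0, mul_comm]
    all_goals simp [h0, h1]
  rw [setIntegral_congr_fun measurableSet_Ioc hleft, setIntegral_congr_fun measurableSet_Ioc hright,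
    integral_neg] at hswap
  exact hswap

theorem integral_comp_qf {μ : Measure ℝ} [IsProbabilityMeasure μ]
    (hsupp : μ (Set.Ico 0 (2*π))ᶜ = 0) {f : ℝ → ℝ} (hf : Continuous f) :
    ∫ u in Ioc 0 1, f (qf μ u) = ∫ x, f x ∂μ := by
  conv_rhs => rw [← map_qf hsupp]
  rw [integral_map (aemeasurable_qf hsupp) hf.aestronglyMeasurable]

theorem integrableOn_comp_qf {μ : Measure ℝ} [IsProbabilityMeasure μ]
    (hsupp : μ (Set.Ico 0 (2*π))ᶜ = 0) {f : ℝ → ℝ} (hf : Continuous f) (hb : ∀ x, |f x| ≤ 1) :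
    IntegrableOn (fun u => f (qf μ u)) (Ioc 0 1) :=
  Integrable.of_bound (hf.measurable.comp_aemeasurable (aemeasurable_qf hsupp)).aestronglyMeasurable
    1 (Filter.Eventually.of_forall fun _ => hb _)

theorem Zc_re {μ : Measure ℝ} [IsProbabilityMeasure μ] (hsupp : μ (Set.Ico 0 (2*π))ᶜ = 0)
    {t : ℝ} (ht : t ∈ Ioc (0:ℝ) 1) : (Zc μ t).re = ∫ u in (0:ℝ)..t, cos (qf μ u) := by
  have hq : AEMeasurable (qf μ) (volume.restrict (Ioc 0 t)) :=
    (aemeasurable_qf hsupp).mono_measure (Measure.restrict_mono (Ioc_subset_Ioc_right ht.2) le_rfl)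
  have hi : Integrable (fun u => Complex.exp (Complex.I * (qf μ u))) (volume.restrict (Ioc 0 t)) := by
    refine Integrable.of_bound (C := 1) ?_ (Filter.Eventually.of_forall fun u => ?_)
    · have hm : Measurable fun x : ℝ => Complex.exp (Complex.I * x) := by fun_prop
      exact (hm.comp_aemeasurable hq).aestronglyMeasurable
    · rw [mul_comm, Complex.norm_exp_ofReal_mul_I]
  rw [Zc, intervalIntegral.integral_of_le ht.1.le, intervalIntegral.integral_of_le ht.1.le]
  have h := integral_re hi
  simp only [RCLike.re_to_complex] at h
  rw [← h]
  congr 1 with u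
  rw [mul_comm, Complex.exp_ofReal_mul_I_re]

theorem integral_cos_eq_zero {μ : Measure ℝ} (ha1 : aF μ 1 = 0) : ∫ x, cos x ∂μ = 0 := by
  simpa [aF, pi_ne_zero] using ha1

theorem integral_sin_eq_zero {μ : Measure ℝ} (hb1 : bF μ 1 = 0) : ∫ x, sin x ∂μ = 0 := by
  simpa [bF, pi_ne_zero] using hb1

theorem integral_sin_abs_qf_sub {μ : Measure ℝ} [IsProbabilityMeasure μ]
    (hsupp : μ (Set.Ico 0 (2*π))ᶜ = 0) (ha1 : aF μ 1 = 0) (hb1 : bF μ 1 = 0)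
    {t : ℝ} (ht : t ∈ Ioc (0:ℝ) 1) :
    ∫ u in Ioc 0 1, sin |qf μ t - qf μ u| =
      2 * ((∫ u in (0:ℝ)..t, cos (qf μ u)) * sin (qf μ t)
        - (∫ u in (0:ℝ)..t, sin (qf μ u)) * cos (qf μ t)) := by
  have hc := integrableOn_comp_qf hsupp continuous_cos abs_cos_le_one
  have hs := integrableOn_comp_qf hsupp continuous_sin abs_sin_le_one
  have hc0 : ∫ u in Ioc 0 1, cos (qf μ u) = 0 :=
    (integral_comp_qf hsupp continuous_cos).trans (integral_cos_eq_zero ha1)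
  have hs0 : ∫ u in Ioc 0 1, sin (qf μ u) = 0 :=
    (integral_comp_qf hsupp continuous_sin).trans (integral_sin_eq_zero hb1)
  have hl : Ioc 0 t ⊆ Ioc (0:ℝ) 1 := Ioc_subset_Ioc_right ht.2
  have hpt : EqOn (fun u => sin |qf μ t - qf μ u|) (fun u =>
      2 * (Ioc 0 t).indicator
          (fun u => sin (qf μ t) * cos (qf μ u) - cos (qf μ t) * sin (qf μ u)) u
        - (sin (qf μ t) * cos (qf μ u) - cos (qf μ t) * sin (qf μ u))) (Ioc 0 1) := by
    intro u hu
    simp only [indicator, mem_Ioc, hu.1, true_and, ← sin_sub]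
    split_ifs with h
    · rw [abs_of_nonneg (sub_nonneg.2 (qf_monotoneOn hsupp hu ht h))]
      ring
    · rw [abs_of_nonpos (sub_nonpos.2 (qf_monotoneOn hsupp ht hu (not_le.1 h).le)), sin_neg]
      ring
  have hd : IntegrableOn (fun u => sin (qf μ t) * cos (qf μ u) - cos (qf μ t) * sin (qf μ u))
      (Ioc 0 1) := (hc.const_mul _).sub (hs.const_mul _)
  rw [setIntegral_congr_fun measurableSet_Ioc hpt,
    integral_sub ((hd.indicator measurableSet_Ioc).const_mul 2) hd,
    integral_const_mul, setIntegral_indicator measurableSet_Ioc, inter_eq_self_of_subset_right hl,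
    integral_sub ((hc.mono_set hl).const_mul _) ((hs.mono_set hl).const_mul _),
    integral_sub (hc.const_mul _) (hs.const_mul _)]
  simp only [integral_const_mul]
  rw [hc0, hs0, intervalIntegral.integral_of_le ht.1.le, intervalIntegral.integral_of_le ht.1.le]
  ring

theorem areaG_eq_integral_sin_abs {μ : Measure ℝ} [IsProbabilityMeasure μ]
    (hsupp : μ (Set.Ico 0 (2*π))ᶜ = 0) (ha1 : aF μ 1 = 0) (hb1 : bF μ 1 = 0) :
    areaG μ = 1 / 4 * ∫ x, ∫ y, sin |x - y| ∂μ ∂μ := by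
  have hc := integrableOn_comp_qf hsupp continuous_cos abs_cos_le_one
  have hs := integrableOn_comp_qf hsupp continuous_sin abs_sin_le_one
  have hs0 : ∫ u in Ioc 0 1, sin (qf μ u) = 0 :=
    (integral_comp_qf hsupp continuous_sin).trans (integral_sin_eq_zero hb1)
  have hprim : ∀ {f g : ℝ → ℝ}, IntegrableOn f (Ioc 0 1) → IntegrableOn g (Ioc 0 1) →
      (∀ x, |g x| ≤ 1) → IntegrableOn (fun t => (∫ u in (0:ℝ)..t, f u) * g t) (Ioc 0 1) := by
    intro f g hf hg hb
    have hcont : ContinuousOn (fun t => ∫ u in (0:ℝ)..t, f u) (Icc 0 1) := by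
      have := intervalIntegral.continuousOn_primitive_interval (a := (0:ℝ)) (b := 1)
        (f := f) (μ := volume) (by
          rw [uIcc_of_le zero_le_one]; rwa [integrableOn_Icc_iff_integrableOn_Ioc])
      rwa [uIcc_of_le zero_le_one] at this
    refine Integrable.mul_bdd (c := 1) ?_ hg.aestronglyMeasurable
      (Filter.Eventually.of_forall hb)
    exact (hcont.integrableOn_Icc).mono_set Ioc_subset_Icc_self
  have hparts := integral_primitive_mul_eq_neg hc hs hs0
  have hinner : Continuous fun x => ∫ y, sin |x - y| ∂μ := by
    refine continuous_of_dominated (bound := fun _ => 1) (fun x => ?_) (fun x => ?_)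
      (integrable_const _) (Filter.Eventually.of_forall fun y => by fun_prop)
    · exact Continuous.aestronglyMeasurable (by fun_prop)
    · exact Filter.Eventually.of_forall fun y => abs_sin_le_one _
  have h1 : areaG μ = ∫ t in Ioc 0 1, (∫ u in (0:ℝ)..t, cos (qf μ u)) * sin (qf μ t) := by
    rw [areaG, intervalIntegral.integral_of_le zero_le_one]
    exact setIntegral_congr_fun measurableSet_Ioc fun t ht => by simp only [Zc_re hsupp ht]
  rw [← integral_comp_qf hsupp hinner]
  have h2 : ∀ t ∈ Ioc (0:ℝ) 1, ∫ y, sin |qf μ t - y| ∂μ =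
      2 * ((∫ u in (0:ℝ)..t, cos (qf μ u)) * sin (qf μ t)
        - (∫ u in (0:ℝ)..t, sin (qf μ u)) * cos (qf μ t)) := fun t ht => by
    rw [← integral_sin_abs_qf_sub hsupp ha1 hb1 ht,
      ← integral_comp_qf hsupp (f := fun y => sin |qf μ t - y|) (by fun_prop)]
  rw [setIntegral_congr_fun measurableSet_Ioc h2, integral_const_mul,
    integral_sub (hprim hc hs fun _ => abs_sin_le_one _) (hprim hs hc fun _ => abs_cos_le_one _), h1,
    hparts]
  ring

instance fact_zero_lt_two_pi : Fact (0 < 2 * π) := ⟨two_pi_pos⟩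

/-- The continuous `2π`-periodic function equal to `(π - θ) sin θ` on `[0, 2π]`. -/
noncomputable def sawSin : C(AddCircle (2*π), ℂ) where
  toFun := AddCircle.liftIco (2*π) 0 fun x : ℝ => (((π - x) * sin x : ℝ) : ℂ)
  continuous_toFun := AddCircle.liftIco_zero_continuous (by simp) (by fun_prop)

theorem fourier_two_pi_apply (n : ℤ) (x : ℝ) :
    fourier n (x : AddCircle (2*π)) = Complex.exp (Complex.I * n * x) := by
  rw [fourier_coe_apply]
  congr 1
  push_cast
  field_simp

theorem exp_int_mul_two_pi (n : ℤ) : Complex.exp (Complex.I * n * ((2 * π : ℝ) : ℂ)) = 1 := by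
  rw [← Complex.exp_int_mul_two_pi_mul_I n]
  congr 1
  push_cast
  ring

theorem hasDerivAt_exp_int_mul (n : ℤ) (x : ℝ) :
    HasDerivAt (fun x : ℝ => Complex.exp (Complex.I * n * x))
      (Complex.I * n * Complex.exp (Complex.I * n * x)) x := by
  have h := ((Complex.ofRealCLM.hasDerivAt (x := x)).const_mul (Complex.I * n)).cexp
  simpa [mul_comm] using h

theorem integral_exp_int_mul {n : ℤ} (hn : n ≠ 0) :
    ∫ x in (0:ℝ)..(2*π), Complex.exp (Complex.I * n * x) = 0 := by
  have hn' : Complex.I * n ≠ 0 := mul_ne_zero Complex.I_ne_zero (Int.cast_ne_zero.2 hn)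
  have h := intervalIntegral.integral_eq_sub_of_hasDerivAt (a := 0) (b := 2*π)
    (fun x _ => hasDerivAt_exp_int_mul n x) (Continuous.intervalIntegrable (by fun_prop) _ _)
  rw [intervalIntegral.integral_const_mul, exp_int_mul_two_pi] at h
  simpa [hn'] using h

theorem integral_cos_mul_exp {n : ℤ} (hn : n ≠ 1) (hn' : n ≠ -1) :
    ∫ x in (0:ℝ)..(2*π), (cos x : ℂ) * Complex.exp (Complex.I * n * x) = 0 := by
  have h : ∀ x : ℝ, (cos x : ℂ) * Complex.exp (Complex.I * n * x)
      = (Complex.exp (Complex.I * (n + 1 : ℤ) * x) + Complex.exp (Complex.I * (n - 1 : ℤ) * x)) / 2 := by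
    intro x
    rw [Complex.ofReal_cos, Complex.cos, div_mul_eq_mul_div, add_mul, ← Complex.exp_add,
      ← Complex.exp_add]
    push_cast
    ring_nf
  simp_rw [h]
  rw [intervalIntegral.integral_div, intervalIntegral.integral_add
    (Continuous.intervalIntegrable (by fun_prop) _ _)
    (Continuous.intervalIntegrable (by fun_prop) _ _),
    integral_exp_int_mul (by lia), integral_exp_int_mul (by lia)]
  simp

theorem integral_sawSin_mul_exp {n : ℤ} (hn : n ≠ 1) (hn' : n ≠ -1) :
    ∫ x in (0:ℝ)..(2*π), (((π - x) * sin x : ℝ) : ℂ) * Complex.exp (Complex.I * n * x)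
      = -(2 * π) / ((n:ℂ)^2 - 1) := by
  have hne : (n:ℂ)^2 - 1 ≠ 0 := by
    rw [sub_ne_zero, Ne, sq_eq_one_iff]
    norm_cast
    tauto
  have hd : ∀ x : ℝ, HasDerivAt (fun x : ℝ =>
      (((-sin x + (π - x) * cos x : ℝ) : ℂ) - Complex.I * n * (((π - x) * sin x : ℝ) : ℂ))
        * Complex.exp (Complex.I * n * x))
      (((n:ℂ)^2 - 1) * ((((π - x) * sin x : ℝ) : ℂ) * Complex.exp (Complex.I * n * x))
        - 2 * ((cos x : ℂ) * Complex.exp (Complex.I * n * x))) x := by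
    intro x
    have h1 : HasDerivAt (fun x : ℝ => (π - x) * sin x) (-sin x + (π - x) * cos x) x := by
      convert! ((hasDerivAt_id x).const_sub π).mul (hasDerivAt_sin x) using 1
      simp
    have h2 : HasDerivAt (fun x : ℝ => -sin x + (π - x) * cos x)
        (-2 * cos x - (π - x) * sin x) x := by
      convert! (hasDerivAt_sin x).neg.add
        (((hasDerivAt_id x).const_sub π).mul (hasDerivAt_cos x)) using 1
      simp
      ring
    convert! (h2.ofReal_comp.sub (h1.ofReal_comp.const_mul (Complex.I * n))).mul
      (hasDerivAt_exp_int_mul n x) using 1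
    simp only [Pi.sub_apply]
    push_cast
    linear_combination ((n:ℂ)^2 * ((π - x) * Complex.sin x) * Complex.exp (Complex.I * n * x)) * Complex.I_sq
  have h := intervalIntegral.integral_eq_sub_of_hasDerivAt (a := 0) (b := 2*π)
    (fun x _ => hd x) (Continuous.intervalIntegrable (by fun_prop) _ _)
  rw [intervalIntegral.integral_sub (Continuous.intervalIntegrable (by fun_prop) _ _)
    (Continuous.intervalIntegrable (by fun_prop) _ _), intervalIntegral.integral_const_mul,
    intervalIntegral.integral_const_mul, integral_cos_mul_exp hn hn', exp_int_mul_two_pi] at h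
  rw [eq_div_iff hne, mul_comm]
  rw [mul_zero, sub_zero] at h
  rw [h]
  simp

theorem fourierCoeff_sawSin {n : ℤ} (hn : n ≠ 1) (hn' : n ≠ -1) :
    fourierCoeff sawSin n = -1 / ((n:ℂ)^2 - 1) := by
  rw [sawSin, ContinuousMap.coe_mk, fourierCoeff_liftIco_eq, fourierCoeffOn_eq_integral]
  have h : ∀ x : ℝ, fourier (-n) (x : AddCircle (0 + 2 * π - 0)) • (((π - x) * sin x : ℝ) : ℂ)
      = (((π - x) * sin x : ℝ) : ℂ) * Complex.exp (Complex.I * (-n : ℤ) * x) := fun x => by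
    have := fourier_two_pi_apply (-n) x
    rw [smul_eq_mul, mul_comm]
    congr 1
    rw [fourier_coe_apply] at this ⊢
    rw [← this]
    simp
  simp_rw [h]
  rw [zero_add, integral_sawSin_mul_exp (by lia) (by lia)]
  have : (π:ℂ) ≠ 0 := by exact_mod_cast pi_ne_zero
  simp
  field_simp

theorem summable_fourierCoeff_sawSin : Summable (fourierCoeff sawSin) := by
  have h : Summable fun n : ℤ => (2:ℝ) / (n:ℝ)^2 := by
    simpa [div_eq_mul_inv] using (Real.summable_one_div_int_pow.2 one_lt_two).mul_left 2
  refine Summable.of_norm_bounded_eventually h ?_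
  have hfin : ({-1, 0, 1} : Set ℤ).Finite := by simp
  filter_upwards [hfin.compl_mem_cofinite] with n hn
  simp only [mem_compl_iff, mem_insert_iff, mem_singleton_iff, not_or] at hn
  rw [fourierCoeff_sawSin hn.2.2 hn.1]
  have h2 : (4:ℝ) ≤ (n:ℝ)^2 := by
    have : 2 ≤ |n| := by have := hn.2.1; rcases abs_cases n with h | h <;> lia
    have : (2:ℤ)^2 ≤ |n|^2 := by gcongr
    rw [sq_abs] at this
    exact_mod_cast this
  have h3 : ((n:ℂ)^2 - 1) = (((n:ℝ)^2 - 1 : ℝ) : ℂ) := by push_cast; rfl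
  rw [h3, norm_div, norm_neg, norm_one, Complex.norm_real, Real.norm_of_nonneg (by linarith),
    div_le_div_iff₀ (by linarith) (by linarith)]
  linarith

theorem sawSin_coe_sub {x y : ℝ} (hx : x ∈ Ico 0 (2*π)) (hy : y ∈ Ico 0 (2*π)) :
    sawSin ((x - y : ℝ) : AddCircle (2*π)) = (((π - |x - y|) * sin |x - y| : ℝ) : ℂ) := by
  rcases le_or_gt y x with h | h
  · rw [abs_of_nonneg (sub_nonneg.2 h), sawSin, ContinuousMap.coe_mk,
      AddCircle.liftIco_coe_apply ⟨sub_nonneg.2 h, by linarith [hx.2, hy.1]⟩]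
  · rw [abs_of_neg (sub_neg.2 h), ← AddCircle.coe_add_period, sawSin, ContinuousMap.coe_mk,
      AddCircle.liftIco_coe_apply ⟨by linarith [hx.1, hy.2], by linarith⟩, sin_add_two_pi, sin_neg]
    congr 1
    ring

theorem integrable_exp_int_mul (μ : Measure ℝ) [IsProbabilityMeasure μ] (n : ℤ) :
    Integrable (fun x : ℝ => Complex.exp (Complex.I * n * x)) μ := by
  refine Integrable.of_bound (C := 1) (Continuous.aestronglyMeasurable (by fun_prop))
    (Filter.Eventually.of_forall fun x => le_of_eq ?_)
  have : Complex.I * n * x = ((n * x : ℝ) : ℂ) * Complex.I := by push_cast; ring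
  rw [this, Complex.norm_exp_ofReal_mul_I]

theorem integral_exp_nat_mul (μ : Measure ℝ) [IsProbabilityMeasure μ] (k : ℕ) :
    ∫ x : ℝ, Complex.exp (Complex.I * (k : ℤ) * x) ∂μ = π * (aF μ k + bF μ k * Complex.I) := by
  have hc : Integrable (fun x : ℝ => (cos (k * x) : ℂ)) μ :=
    Integrable.of_bound (C := 1) (Continuous.aestronglyMeasurable (by fun_prop))
      (Filter.Eventually.of_forall fun x => by
        rw [Complex.norm_real]; exact abs_cos_le_one _)
  have hs : Integrable (fun x : ℝ => (sin (k * x) : ℂ) * Complex.I) μ :=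
    (Integrable.of_bound (C := 1) (Continuous.aestronglyMeasurable (by fun_prop))
      (Filter.Eventually.of_forall fun x => by
        rw [Complex.norm_real]; exact abs_sin_le_one _)).mul_const _
  have h : ∀ x : ℝ, Complex.exp (Complex.I * (k : ℤ) * x)
      = (cos (k * x) : ℂ) + (sin (k * x) : ℂ) * Complex.I := fun x => by
    rw [Complex.ofReal_cos, Complex.ofReal_sin, ← Complex.exp_mul_I]
    push_cast
    ring_nf
  have hpi : (π:ℂ) ≠ 0 := by exact_mod_cast pi_ne_zero
  simp_rw [h]
  rw [integral_add hc hs, integral_mul_const, integral_complex_ofReal, integral_complex_ofReal, aF, bF]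
  push_cast
  field_simp

theorem integral_exp_neg_nat_mul (μ : Measure ℝ) [IsProbabilityMeasure μ] (k : ℕ) :
    ∫ x : ℝ, Complex.exp (Complex.I * (-k : ℤ) * x) ∂μ = π * (aF μ k - bF μ k * Complex.I) := by
  have h : ∀ x : ℝ, Complex.exp (Complex.I * (-k : ℤ) * x)
      = (starRingEnd ℂ) (Complex.exp (Complex.I * (k : ℤ) * x)) := fun x => by
    rw [← Complex.exp_conj]
    simp
  simp_rw [h]
  rw [integral_conj, integral_exp_nat_mul]
  simp [sub_eq_add_neg]

theorem hasSum_integral_sawSin (μ : Measure ℝ) [IsProbabilityMeasure μ] :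
    HasSum (fun n : ℤ => fourierCoeff sawSin n * ((∫ x : ℝ, Complex.exp (Complex.I * n * x) ∂μ)
        * ∫ x : ℝ, Complex.exp (Complex.I * (-n : ℤ) * x) ∂μ))
      (∫ p : ℝ × ℝ, sawSin ((p.1 - p.2 : ℝ) : AddCircle (2*π)) ∂(μ.prod μ)) := by
  have hF : ∀ (n : ℤ) (p : ℝ × ℝ), fourierCoeff sawSin n • fourier n ((p.1 - p.2 : ℝ) : AddCircle (2*π))
      = fourierCoeff sawSin n
        * (Complex.exp (Complex.I * n * p.1) * Complex.exp (Complex.I * (-n : ℤ) * p.2)) := by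
    intro n p
    rw [fourier_two_pi_apply, smul_eq_mul, ← Complex.exp_add]
    push_cast
    ring_nf
  have hint : ∀ n : ℤ, Integrable (fun p : ℝ × ℝ =>
      fourierCoeff sawSin n • fourier n ((p.1 - p.2 : ℝ) : AddCircle (2*π))) (μ.prod μ) := fun n => by
    simp_rw [hF]
    exact ((integrable_exp_int_mul μ n).mul_prod (integrable_exp_int_mul μ (-n))).const_mul _
  have hnorm : ∀ n : ℤ, ∫ p : ℝ × ℝ,
      ‖fourierCoeff sawSin n • fourier n ((p.1 - p.2 : ℝ) : AddCircle (2*π))‖ ∂(μ.prod μ)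
        = ‖fourierCoeff sawSin n‖ := fun n => by
    simp_rw [norm_smul, fourier_apply, Circle.norm_coe, mul_one]
    simp
  have h := hasSum_integral_of_summable_integral_norm hint
    (by simp_rw [hnorm]; exact summable_fourierCoeff_sawSin.norm)
  have hsum : ∀ p : ℝ × ℝ, ∑' n : ℤ, fourierCoeff sawSin n • fourier n ((p.1 - p.2 : ℝ) : AddCircle (2*π))
      = sawSin ((p.1 - p.2 : ℝ) : AddCircle (2*π)) := fun p =>
    (has_pointwise_sum_fourier_series_of_summable summable_fourierCoeff_sawSin _).tsum_eq
  simp only [hsum] at h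
  convert! h using 2 with n
  simp_rw [hF]
  rw [integral_const_mul, integral_prod_mul (fun x : ℝ => Complex.exp (Complex.I * n * x))
    (fun x : ℝ => Complex.exp (Complex.I * (-n : ℤ) * x))]

theorem hasSum_fourier_integral_sawSin {μ : Measure ℝ} [IsProbabilityMeasure μ]
    (ha1 : aF μ 1 = 0) (hb1 : bF μ 1 = 0) :
    HasSum (fun k : ℕ => (((aF μ (k+2)^2 + bF μ (k+2)^2) / (((k:ℝ)+2)^2 - 1) : ℝ) : ℂ))
      ((1 - ∫ p : ℝ × ℝ, sawSin ((p.1 - p.2 : ℝ) : AddCircle (2*π)) ∂(μ.prod μ)) / (2 * π^2)) := by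
  have hpi : (π:ℂ) ≠ 0 := by exact_mod_cast pi_ne_zero
  have h0 : ∀ c : ℤ, c = 0 → fourierCoeff sawSin c * ((∫ x : ℝ, Complex.exp (Complex.I * c * x) ∂μ)
        * ∫ x : ℝ, Complex.exp (Complex.I * (-c : ℤ) * x) ∂μ) = 1 := by
    rintro _ rfl
    rw [fourierCoeff_sawSin (by simp) (by simp)]
    simp
  have h := (hasSum_nat_add_iff' 2).2 (hasSum_integral_sawSin μ).nat_add_neg
  simp only [Finset.sum_range_succ, Finset.sum_range_zero] at h
  rw [h0 0 rfl, h0 _ Nat.cast_zero, h0 _ (by simp)] at h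
  simp only [neg_neg, integral_exp_nat_mul, integral_exp_neg_nat_mul, ha1, hb1] at h
  convert! h.mul_left (-1 / (2 * (π:ℂ)^2)) using 1
  · ext k
    have hk : ((k:ℂ) + 2)^2 - 1 ≠ 0 := by
      have : ((k:ℝ)+2)^2 - 1 ≠ 0 := by nlinarith [(Nat.cast_nonneg k : (0:ℝ) ≤ k)]
      exact_mod_cast this
    rw [fourierCoeff_sawSin (by lia) (by lia), fourierCoeff_sawSin (by lia) (by lia)]
    push_cast
    rw [neg_sq]
    field_simp
    linear_combination (2 * (bF μ (k+2) : ℂ)^2) * Complex.I_sq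
  · simp
    field_simp
    ring

theorem ae_mem_Ico_prod {μ : Measure ℝ} [IsProbabilityMeasure μ]
    (hsupp : μ (Set.Ico 0 (2*π))ᶜ = 0) :
    ∀ᵐ p ∂(μ.prod μ), p.1 ∈ Ico 0 (2*π) ∧ p.2 ∈ Ico 0 (2*π) := by
  have h : ∀ᵐ x ∂μ, x ∈ Ico 0 (2*π) := hsupp
  exact (Measure.quasiMeasurePreserving_fst.ae h).and (Measure.quasiMeasurePreserving_snd.ae h)

theorem integral_sub_mul_sin_sub {μ : Measure ℝ} [IsProbabilityMeasure μ]
    (hsupp : μ (Set.Ico 0 (2*π))ᶜ = 0) (ha1 : aF μ 1 = 0) (hb1 : bF μ 1 = 0) :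
    ∫ p : ℝ × ℝ, (p.1 - p.2) * sin (p.1 - p.2) ∂(μ.prod μ) = 0 := by
  have hx : ∀ {f : ℝ → ℝ}, Continuous f → (∀ x, |f x| ≤ 1) → Integrable (fun x => x * f x) μ := by
    intro f hf hb
    refine Integrable.of_bound (C := 2 * π) (Continuous.aestronglyMeasurable (by fun_prop)) ?_
    have h : ∀ᵐ x ∂μ, x ∈ Ico 0 (2*π) := hsupp
    filter_upwards [h] with x hx
    rw [norm_mul, Real.norm_of_nonneg hx.1, ← mul_one (2 * π)]
    exact mul_le_mul hx.2.le (hb x) (abs_nonneg _) two_pi_pos.le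
  have hi : ∀ {f : ℝ → ℝ}, Continuous f → (∀ x, |f x| ≤ 1) → Integrable f μ := fun hf hb =>
    Integrable.of_bound (C := 1) hf.aestronglyMeasurable (Filter.Eventually.of_forall hb)
  have hs := hi continuous_sin abs_sin_le_one
  have hc := hi continuous_cos abs_cos_le_one
  have hxs := hx continuous_sin abs_sin_le_one
  have hxc := hx continuous_cos abs_cos_le_one
  have h : ∀ p : ℝ × ℝ, (p.1 - p.2) * sin (p.1 - p.2)
      = (p.1 * sin p.1) * cos p.2 - (p.1 * cos p.1) * sin p.2
        - (sin p.1 * (p.2 * cos p.2) - cos p.1 * (p.2 * sin p.2)) := fun p => by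
    rw [sin_sub]; ring
  simp_rw [h]
  have h1 : Integrable (fun p : ℝ × ℝ => (p.1 * sin p.1) * cos p.2) (μ.prod μ) := hxs.mul_prod hc
  have h2 : Integrable (fun p : ℝ × ℝ => (p.1 * cos p.1) * sin p.2) (μ.prod μ) := hxc.mul_prod hs
  have h3 : Integrable (fun p : ℝ × ℝ => sin p.1 * (p.2 * cos p.2)) (μ.prod μ) := hs.mul_prod hxc
  have h4 : Integrable (fun p : ℝ × ℝ => cos p.1 * (p.2 * sin p.2)) (μ.prod μ) := hc.mul_prod hxs
  have h12 : Integrable (fun p : ℝ × ℝ => (p.1 * sin p.1) * cos p.2 - (p.1 * cos p.1) * sin p.2)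
      (μ.prod μ) := h1.sub h2
  have h34 : Integrable (fun p : ℝ × ℝ => sin p.1 * (p.2 * cos p.2) - cos p.1 * (p.2 * sin p.2))
      (μ.prod μ) := h3.sub h4
  rw [integral_sub h12 h34, integral_sub h1 h2, integral_sub h3 h4]
  rw [integral_prod_mul (fun x => x * sin x) cos, integral_prod_mul (fun x => x * cos x) sin,
    integral_prod_mul sin (fun x => x * cos x), integral_prod_mul cos (fun x => x * sin x),
    integral_cos_eq_zero ha1, integral_sin_eq_zero hb1]
  simp

theorem integral_sawSin_eq {μ : Measure ℝ} [IsProbabilityMeasure μ]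
    (hsupp : μ (Set.Ico 0 (2*π))ᶜ = 0) (ha1 : aF μ 1 = 0) (hb1 : bF μ 1 = 0) :
    ∫ p : ℝ × ℝ, sawSin ((p.1 - p.2 : ℝ) : AddCircle (2*π)) ∂(μ.prod μ)
      = ((π * ∫ x, ∫ y, sin |x - y| ∂μ ∂μ : ℝ) : ℂ) := by
  have hae := ae_mem_Ico_prod hsupp
  have hsin : Integrable (fun p : ℝ × ℝ => sin |p.1 - p.2|) (μ.prod μ) :=
    Integrable.of_bound (C := 1) (Continuous.aestronglyMeasurable (by fun_prop))
      (Filter.Eventually.of_forall fun _ => abs_sin_le_one _)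
  have hlin : Integrable (fun p : ℝ × ℝ => (p.1 - p.2) * sin (p.1 - p.2)) (μ.prod μ) := by
    refine Integrable.of_bound (C := 2 * π) (Continuous.aestronglyMeasurable (by fun_prop)) ?_
    filter_upwards [hae] with p hp
    rw [norm_mul, ← mul_one (2 * π)]
    refine mul_le_mul (abs_le.2 ⟨?_, ?_⟩) (abs_sin_le_one _) (abs_nonneg _) two_pi_pos.le
    · linarith [hp.1.1, hp.2.2]
    · linarith [hp.1.2, hp.2.1]
  have hcongr : ∀ᵐ p ∂(μ.prod μ), sawSin ((p.1 - p.2 : ℝ) : AddCircle (2*π))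
      = ((π * sin |p.1 - p.2| - (p.1 - p.2) * sin (p.1 - p.2) : ℝ) : ℂ) := by
    filter_upwards [hae] with p hp
    rw [sawSin_coe_sub hp.1 hp.2]
    congr 1
    rcases abs_cases (p.1 - p.2) with h | h <;> rw [h.1]
    · ring
    · rw [sin_neg]; ring
  rw [integral_congr_ae hcongr, integral_complex_ofReal,
    integral_sub (hsin.const_mul π) hlin, integral_sub_mul_sin_sub hsupp ha1 hb1, sub_zero,
    integral_const_mul, integral_prod _ hsin]

/-- Hurwitz's formula, with convergence of the series. -/
theorem hasSum_hurwitz {μ : Measure ℝ} [IsProbabilityMeasure μ]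
    (hsupp : μ (Set.Ico 0 (2*π))ᶜ = 0) (ha1 : aF μ 1 = 0) (hb1 : bF μ 1 = 0) :
    HasSum (fun k : ℕ => (aF μ (k+2)^2 + bF μ (k+2)^2) / (((k:ℝ)+2)^2 - 1))
      ((1 - 4 * π * areaG μ) / (2 * π^2)) := by
  have h := hasSum_fourier_integral_sawSin ha1 hb1
  rw [integral_sawSin_eq hsupp ha1 hb1] at h
  rw [areaG_eq_integral_sin_abs hsupp ha1 hb1, ← Complex.hasSum_ofReal]
  convert! h using 1
  push_cast
  ring

theorem continuous_integral_continuousMap {X : Type*} [TopologicalSpace X] [CompactSpace X]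
    [MeasurableSpace X] [BorelSpace X] (μ : Measure X) [IsFiniteMeasure μ] :
    Continuous fun f : C(X, ℂ) => ∫ x, f x ∂μ := by
  have hi : ∀ f : C(X, ℂ), Integrable f μ := fun f =>
    Integrable.of_bound (C := ‖f‖) f.continuous.aestronglyMeasurable
      (Filter.Eventually.of_forall f.norm_coe_le_norm)
  refine (LipschitzWith.of_dist_le_mul (K := (μ univ).toNNReal) fun f g => ?_).continuous
  rw [dist_eq_norm, ← integral_sub (hi f) (hi g), dist_eq_norm, mul_comm]
  exact norm_integral_le_of_norm_le_const
    (Filter.Eventually.of_forall fun x => (f - g).norm_coe_le_norm x)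

/-- A finite measure on the circle is determined by its Fourier coefficients. -/
theorem ext_of_integral_fourier {T : ℝ} [Fact (0 < T)] {μ ν : Measure (AddCircle T)}
    [IsFiniteMeasure μ] [IsFiniteMeasure ν]
    (h : ∀ n : ℤ, ∫ x, fourier n x ∂μ = ∫ x, fourier n x ∂ν) : μ = ν := by
  have hi : ∀ (f : C(AddCircle T, ℂ)) (ρ : Measure (AddCircle T)) [IsFiniteMeasure ρ],
      Integrable f ρ := fun f ρ _ =>
    Integrable.of_bound (C := ‖f‖) f.continuous.aestronglyMeasurable
      (Filter.Eventually.of_forall f.norm_coe_le_norm)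
  have hspan : ∀ f ∈ Submodule.span ℂ (range (@fourier T)), ∫ x, f x ∂μ = ∫ x, f x ∂ν := by
    intro f hf
    induction hf using Submodule.span_induction with
    | mem f hf => obtain ⟨n, rfl⟩ := hf; exact h n
    | zero => simp
    | add f g _ _ hf hg =>
      simp only [ContinuousMap.add_apply]
      rw [integral_add (hi f μ) (hi g μ), integral_add (hi f ν) (hi g ν), hf, hg]
    | smul c f _ hf =>
      simp only [ContinuousMap.smul_apply]
      rw [integral_smul, integral_smul, hf]
  have hall : ∀ f : C(AddCircle T, ℂ), ∫ x, f x ∂μ = ∫ x, f x ∂ν := fun f => by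
    have hf : f ∈ closure (Submodule.span ℂ (range (@fourier T)) : Set C(AddCircle T, ℂ)) := by
      rw [← Submodule.topologicalClosure_coe, span_fourier_closure_eq_top]
      trivial
    exact closure_minimal (t := {f : C(AddCircle T, ℂ) | ∫ x, f x ∂μ = ∫ x, f x ∂ν}) hspan
      (isClosed_eq (continuous_integral_continuousMap μ) (continuous_integral_continuousMap ν)) hf
  refine ext_of_forall_integral_eq_of_IsFiniteMeasure fun f => ?_
  have := hall ⟨fun x => (f x : ℂ), by fun_prop⟩
  simp only [ContinuousMap.coe_mk, integral_complex_ofReal] at this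
  exact_mod_cast this

/-- A probability measure on `[0, 2π)` is determined by its Fourier coefficients. -/
theorem ext_of_integral_exp_int_mul {μ ν : Measure ℝ} [IsProbabilityMeasure μ]
    [IsProbabilityMeasure ν] (hμ : μ (Ico 0 (2*π))ᶜ = 0) (hν : ν (Ico 0 (2*π))ᶜ = 0)
    (h : ∀ n : ℤ, ∫ x : ℝ, Complex.exp (Complex.I * n * x) ∂μ
      = ∫ x : ℝ, Complex.exp (Complex.I * n * x) ∂ν) : μ = ν := by
  have hm : Measurable fun x : ℝ => (x : AddCircle (2*π)) := AddCircle.measurable_mk'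
  have hmap : μ.map (fun x : ℝ => (x : AddCircle (2*π))) = ν.map fun x : ℝ => (x : AddCircle (2*π)) := by
    have := Measure.isProbabilityMeasure_map (μ := μ) hm.aemeasurable
    have := Measure.isProbabilityMeasure_map (μ := ν) hm.aemeasurable
    refine ext_of_integral_fourier fun n => ?_
    rw [integral_map hm.aemeasurable (fourier n).continuous.aestronglyMeasurable,
      integral_map hm.aemeasurable (fourier n).continuous.aestronglyMeasurable]
    simpa only [fourier_two_pi_apply] using h n
  have hg : Measurable fun z : AddCircle (2*π) => (AddCircle.measurableEquivIco (2*π) 0 z : ℝ) :=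
    measurable_subtype_coe.comp (AddCircle.measurableEquivIco (2*π) 0).measurable
  have hback : ∀ ρ : Measure ℝ, ρ (Ico 0 (2*π))ᶜ = 0 →
      (ρ.map fun x : ℝ => (x : AddCircle (2*π))).map
        (fun z : AddCircle (2*π) => (AddCircle.measurableEquivIco (2*π) 0 z : ℝ)) = ρ := by
    intro ρ hρ
    rw [Measure.map_map hg hm]
    have hae : ∀ᵐ x ∂ρ, x ∈ Ico 0 (2*π) := hρ
    conv_rhs => rw [← Measure.map_id (μ := ρ)]
    refine Measure.map_congr ?_
    filter_upwards [hae] with x hx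
    change ((AddCircle.equivIco (2*π) 0 (x : AddCircle (2*π))) : ℝ) = x
    rw [AddCircle.equivIco_coe_eq (p := 2*π) (a := 0) (x := x) (by rwa [zero_add])]
  rw [← hback μ hμ, ← hback ν hν, hmap]

/-- The uniform probability measure on `[0, 2π)`. -/
noncomputable def uniformCircle : Measure ℝ :=
  (ENNReal.ofReal (2*π))⁻¹ • volume.restrict (Set.Ico 0 (2*π))

instance isProbabilityMeasure_uniformCircle : IsProbabilityMeasure uniformCircle := ⟨by
  have h : ENNReal.ofReal (2*π) ≠ 0 := by simp [pi_pos]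
  simp only [uniformCircle, Measure.smul_apply, Measure.restrict_apply_univ, Real.volume_Ico,
    sub_zero, smul_eq_mul]
  exact ENNReal.inv_mul_cancel h ENNReal.ofReal_ne_top⟩

theorem uniformCircle_compl_Ico : uniformCircle (Ico 0 (2*π))ᶜ = 0 := by
  simp [uniformCircle, Measure.restrict_apply measurableSet_Ico.compl]

theorem integral_exp_int_mul_uniformCircle {n : ℤ} (hn : n ≠ 0) :
    ∫ x : ℝ, Complex.exp (Complex.I * n * x) ∂uniformCircle = 0 := by
  rw [uniformCircle, integral_smul_measure, integral_Ico_eq_integral_Ioc,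
    ← intervalIntegral.integral_of_le two_pi_pos.le, integral_exp_int_mul hn, smul_zero]

theorem eq_uniformCircle_iff {μ : Measure ℝ} [IsProbabilityMeasure μ]
    (hsupp : μ (Set.Ico 0 (2*π))ᶜ = 0) :
    μ = uniformCircle ↔ ∀ k : ℕ, k ≠ 0 → aF μ k = 0 ∧ bF μ k = 0 := by
  have hpi : (π:ℂ) ≠ 0 := by exact_mod_cast pi_ne_zero
  constructor
  · rintro rfl k hk
    have h := integral_exp_nat_mul uniformCircle k
    rw [integral_exp_int_mul_uniformCircle (Int.natCast_ne_zero.2 hk), eq_comm, mul_eq_zero,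
      or_iff_right hpi] at h
    have hre := congrArg Complex.re h
    have him := congrArg Complex.im h
    simp only [Complex.add_re, Complex.add_im, Complex.mul_re, Complex.mul_im, Complex.ofReal_re,
      Complex.ofReal_im, Complex.I_re, Complex.I_im, Complex.zero_re, Complex.zero_im] at hre him
    exact ⟨by linarith, by linarith⟩
  · intro h
    refine ext_of_integral_exp_int_mul hsupp uniformCircle_compl_Ico fun n => ?_
    rcases eq_or_ne n 0 with rfl | hn
    · simp
    rw [integral_exp_int_mul_uniformCircle hn]
    obtain ⟨k, rfl | rfl⟩ := n.eq_nat_or_neg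
    · rw [integral_exp_nat_mul, (h k (by lia)).1, (h k (by lia)).2]
      simp
    · rw [integral_exp_neg_nat_mul, (h k (by lia)).1, (h k (by lia)).2]
      simp

theorem stmt4 (μ : Measure ℝ) [IsProbabilityMeasure μ]
    (hsupp : μ (Set.Ico 0 (2*π))ᶜ = 0)
    (ha1 : aF μ 1 = 0) (hb1 : bF μ 1 = 0) :
    areaG μ = 1/(4*π) - (π/2) * ∑' k : ℕ, (aF μ (k+2)^2 + bF μ (k+2)^2) / (((k:ℝ)+2)^2 - 1)
    ∧ areaG μ ≤ 1/(4*π)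
    ∧ (areaG μ = 1/(4*π) ↔
        μ = (ENNReal.ofReal (2*π))⁻¹ • volume.restrict (Set.Ico 0 (2*π))) := by
  have hsum := hasSum_hurwitz hsupp ha1 hb1
  have hden : ∀ k : ℕ, 0 < ((k:ℝ)+2)^2 - 1 := fun k => by
    nlinarith [(Nat.cast_nonneg k : (0:ℝ) ≤ k)]
  have hnn : ∀ k : ℕ, 0 ≤ (aF μ (k+2)^2 + bF μ (k+2)^2) / (((k:ℝ)+2)^2 - 1) := fun k =>
    div_nonneg (by positivity) (hden k).le
  have harea : areaG μ = 1/(4*π) - (π/2) * ((1 - 4 * π * areaG μ) / (2 * π^2)) := by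
    field_simp
    ring
  have hS := hsum.nonneg hnn
  refine ⟨by rw [hsum.tsum_eq, ← harea], ?_, ?_⟩
  · rw [harea]
    exact sub_le_self _ (mul_nonneg (by positivity) hS)
  · have hzero : areaG μ = 1/(4*π) ↔ (1 - 4 * π * areaG μ) / (2 * π^2) = 0 := by
      rw [eq_div_iff (by positivity), div_eq_zero_iff, or_iff_left (by positivity), sub_eq_zero,
        mul_comm, eq_comm]
    change _ ↔ μ = uniformCircle
    rw [hzero, eq_uniformCircle_iff hsupp]
    constructor
    · intro h k hk
      rw [h] at hsum
      have hall := (hasSum_zero_iff_of_nonneg hnn).1 hsum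
      match k, hk with
      | 1, _ => exact ⟨ha1, hb1⟩
      | k + 2, _ =>
        have hk := congrFun hall k
        simp only [Pi.zero_apply, div_eq_zero_iff, (hden k).ne', or_false] at hk
        constructor <;> nlinarith [sq_nonneg (aF μ (k+2)), sq_nonneg (bF μ (k+2))]
    · intro h
      rw [← hsum.tsum_eq]
      simp [h]
end

section
/- Let μ, ν ∈ M⁰_T and λ ∈ [0,1]. Then A(λμ + (1−λ)ν)^{1/2} ≥ λ A(μ)^{1/2} + (1−λ) A(ν)^{1/2} (Brunn–Minkowski inequality expressed via Hurwitz's area formula). In particular A(λμ + (1−λ)ν) ≥ min{A(μ), A(ν)}. -/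
open MeasureTheory Real Set

lemma summable_one_div_add_two_sq_sub_one :
    Summable fun k : ℕ => 1 / (((k : ℝ) + 2) ^ 2 - 1) := by
  have h : Summable fun k : ℕ => 1 / ((k : ℝ) + 1) ^ 2 := by
    simpa using (summable_nat_add_iff 1).2 (Real.summable_one_div_nat_pow.2 one_lt_two)
  refine h.of_nonneg_of_le (fun k => ?_) fun k => ?_
  · exact one_div_nonneg.2 (by nlinarith [(Nat.cast_nonneg k : (0 : ℝ) ≤ k)])
  · exact one_div_le_one_div_of_le (by positivity)
      (by nlinarith [(Nat.cast_nonneg k : (0 : ℝ) ≤ k)])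

/-- The `1`-periodic function equal to `(1/2 - x) sin (2πx)` on `[0, 1)`. -/
noncomputable def sawtoothMulSin : C(UnitAddCircle, ℂ) where
  toFun := AddCircle.liftIco 1 0 fun x : ℝ =>
    (((1 / 2 - x) * Real.sin (2 * π * x) : ℝ) : ℂ)
  continuous_toFun := by
    refine AddCircle.liftIco_continuous (by simp) ?_
    fun_prop

lemma fourierCoeff_sawtoothMulSin (n : ℤ) :
    fourierCoeff sawtoothMulSin n =
      ((-(1 / (4 * π)) * (1 / ((n : ℝ) - 1) - 1 / ((n : ℝ) + 1)) : ℝ) : ℂ) := by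
  have hB (m : ℤ) : ∫ x in (0 : ℝ)..1,
      fourier (-m) (x : AddCircle ((1 : ℝ) - 0)) * (bernoulliFun 1 x : ℂ)
        = -1 / (2 * π * Complex.I * m) := by
    have h := bernoulliFourierCoeff_eq one_ne_zero m
    rw [bernoulliFourierCoeff, fourierCoeffOn_eq_integral] at h
    simpa using h
  have hint (m : ℤ) : IntervalIntegrable (fun x : ℝ =>
      fourier (-m) (x : AddCircle ((1 : ℝ) - 0)) * (bernoulliFun 1 x : ℂ)) volume 0 1 := by
    refine Continuous.intervalIntegrable ?_ _ _
    simp only [fourier_coe_apply, bernoulliFun_one]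
    fun_prop
  have hf : (sawtoothMulSin : UnitAddCircle → ℂ) = AddCircle.liftIco 1 0 fun x : ℝ =>
    (((1 / 2 - x) * Real.sin (2 * π * x) : ℝ) : ℂ) := rfl
  rw [hf, fourierCoeff_liftIco_eq, fourierCoeffOn_eq_integral]
  have hpt (x : ℝ) : fourier (-n) (x : AddCircle ((0 : ℝ) + 1 - 0)) •
      (((1 / 2 - x) * Real.sin (2 * π * x) : ℝ) : ℂ) =
      Complex.I / 2 * (fourier (-(n - 1)) (x : AddCircle ((1 : ℝ) - 0)) * (bernoulliFun 1 x : ℂ)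
        - fourier (-(n + 1)) (x : AddCircle ((1 : ℝ) - 0)) * (bernoulliFun 1 x : ℂ)) := by
    have e1 : fourier (-(n - 1)) (x : AddCircle ((1 : ℝ) - 0)) =
        Complex.exp (2 * π * Complex.I * (-n) * x) * Complex.exp (2 * π * x * Complex.I) := by
      rw [fourier_coe_apply, ← Complex.exp_add]; congr 1; push_cast; ring
    have e2 : fourier (-(n + 1)) (x : AddCircle ((1 : ℝ) - 0)) =
        Complex.exp (2 * π * Complex.I * (-n) * x) * Complex.exp (-(2 * π * x) * Complex.I) := by
      rw [fourier_coe_apply, ← Complex.exp_add]; congr 1; push_cast; ring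
    have e3 : fourier (-n) (x : AddCircle ((0 : ℝ) + 1 - 0)) =
        Complex.exp (2 * π * Complex.I * (-n) * x) := by
      rw [fourier_coe_apply]; congr 1; push_cast; ring
    rw [e1, e2, e3, bernoulliFun_one]
    push_cast
    rw [Complex.sin, smul_eq_mul]
    ring
  simp_rw [hpt]
  rw [intervalIntegral.integral_const_mul]
  have h01 : (0 : ℝ) + 1 = 1 := zero_add 1
  rw [h01, intervalIntegral.integral_sub (hint _) (hint _), hB, hB]
  have hI : Complex.I * Complex.I⁻¹ = 1 := mul_inv_cancel₀ Complex.I_ne_zero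
  simp only [sub_zero, div_one, one_smul]
  push_cast
  simp only [div_eq_mul_inv, mul_inv]
  linear_combination (-(1 / 4) * (π : ℂ)⁻¹ * (((n : ℂ) - 1)⁻¹ - ((n : ℂ) + 1)⁻¹)) * hI

lemma summable_fourierCoeff_sawtoothMulSin : Summable (fourierCoeff sawtoothMulSin) := by
  have h : Summable fun k : ℕ =>
      ((-(1 / (4 * π)) * (2 * (1 / (((k : ℝ) + 2) ^ 2 - 1))) : ℝ) : ℂ) :=
    Complex.summable_ofReal.2 ((summable_one_div_add_two_sq_sub_one.mul_left 2).mul_left _)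
  refine Summable.of_nat_of_neg ((summable_nat_add_iff 2).1 (h.congr fun k => ?_))
    ((summable_nat_add_iff 2).1 (h.congr fun k => ?_)) <;>
  · have hk : (0 : ℝ) ≤ k := Nat.cast_nonneg k
    rw [fourierCoeff_sawtoothMulSin, Complex.ofReal_inj]
    have h1 : (k : ℝ) + 1 ≠ 0 := by positivity
    have h3 : (k : ℝ) + 3 ≠ 0 := by positivity
    have e : ((k : ℝ) + 2) ^ 2 - 1 = (k + 1) * (k + 3) := by ring
    rw [e]
    push_cast
    first
    | rw [show (k : ℝ) + 2 - 1 = k + 1 by ring, show (k : ℝ) + 2 + 1 = k + 3 by ring]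
    | rw [show -((k : ℝ) + 2) - 1 = -(k + 3) by ring, show -((k : ℝ) + 2) + 1 = -(k + 1) by ring]
    field_simp
    ring

lemma hasSum_cos_div_add_two_sq_sub_one {x : ℝ} (hx : x ∈ Ico (0 : ℝ) 1) :
    HasSum (fun k : ℕ => Real.cos (((k : ℝ) + 2) * (2 * π * x)) / (((k : ℝ) + 2) ^ 2 - 1))
      (1 / 2 + Real.cos (2 * π * x) / 4 - π * (1 / 2 - x) * Real.sin (2 * π * x)) := by
  have hval : sawtoothMulSin (x : UnitAddCircle) =
      (((1 / 2 - x) * Real.sin (2 * π * x) : ℝ) : ℂ) :=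
    AddCircle.liftIco_coe_apply (p := (1 : ℝ)) (a := 0)
      (f := fun y : ℝ => (((1 / 2 - y) * Real.sin (2 * π * y) : ℝ) : ℂ)) (by simpa using hx)
  have h := (has_pointwise_sum_fourier_series_of_summable
    summable_fourierCoeff_sawtoothMulSin (x : UnitAddCircle)).nat_add_neg
  rw [hval] at h
  have hre := ((hasSum_nat_add_iff' 2).2 (Complex.hasSum_re h)).mul_left (-π)
  have key (m : ℤ) : (fourierCoeff sawtoothMulSin m • fourier m (x : UnitAddCircle)).re =
      -(1 / (4 * π)) * (1 / ((m : ℝ) - 1) - 1 / ((m : ℝ) + 1)) * Real.cos (m * (2 * π * x)) := by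
    rw [fourierCoeff_sawtoothMulSin, smul_eq_mul, Complex.re_ofReal_mul, fourier_coe_apply,
      show 2 * π * Complex.I * m * x / ((1 : ℝ) : ℂ) = ((m * (2 * π * x) : ℝ) : ℂ) * Complex.I by
        push_cast; ring, Complex.exp_ofReal_mul_I_re]
  simp only [Complex.add_re, key, Finset.sum_range_succ, Finset.sum_range_zero,
    Complex.ofReal_re] at hre
  convert! hre using 1
  · funext k
    have hk : (0 : ℝ) ≤ k := Nat.cast_nonneg k
    have h1 : (k : ℝ) + 1 ≠ 0 := by positivity
    have h3 : (k : ℝ) + 3 ≠ 0 := by positivity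
    push_cast
    rw [neg_mul ((k : ℝ) + 2), Real.cos_neg,
      show ((k : ℝ) + 2) ^ 2 - 1 = (k + 1) * (k + 3) by ring,
      show (k : ℝ) + 2 - 1 = k + 1 by ring, show (k : ℝ) + 2 + 1 = k + 3 by ring,
      show -((k : ℝ) + 2) - 1 = -(k + 3) by ring, show -((k : ℝ) + 2) + 1 = -(k + 1) by ring]
    field_simp
    ring
  · norm_num
    field_simp
    ring

lemma tsum_cos_div_add_two_sq_sub_one_le (t : ℝ) :
    ∑' k : ℕ, Real.cos (((k : ℝ) + 2) * t) / (((k : ℝ) + 2) ^ 2 - 1) ≤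
      1 / 2 + Real.cos t / 4 := by
  set x := Int.fract (t / (2 * π)) with hx
  have hx0 : 0 ≤ x := Int.fract_nonneg _
  have hx1 : x < 1 := Int.fract_lt_one _
  have ht : t = 2 * π * x + ⌊t / (2 * π)⌋ * (2 * π) := by
    rw [hx, Int.fract]; field_simp; ring
  have hcos (k : ℕ) : Real.cos (((k : ℝ) + 2) * t) = Real.cos (((k : ℝ) + 2) * (2 * π * x)) := by
    rw [← Real.cos_add_int_mul_two_pi (((k : ℝ) + 2) * (2 * π * x)) ((k + 2) * ⌊t / (2 * π)⌋)]
    conv_lhs => rw [ht]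
    congr 1
    push_cast
    ring
  have hcos1 : Real.cos t = Real.cos (2 * π * x) := by
    conv_lhs => rw [ht]
    exact Real.cos_add_int_mul_two_pi _ _
  simp_rw [hcos, hcos1]
  rw [(hasSum_cos_div_add_two_sq_sub_one ⟨hx0, hx1⟩).tsum_eq]
  have hnn : 0 ≤ (1 / 2 - x) * Real.sin (2 * π * x) := by
    rcases le_total x (1 / 2) with h | h
    · exact mul_nonneg (by linarith)
        (Real.sin_nonneg_of_nonneg_of_le_pi (by positivity) (by nlinarith [Real.pi_pos]))
    · refine mul_nonneg_of_nonpos_of_nonpos (by linarith) ?_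
      rw [← Real.sin_sub_two_pi]
      exact Real.sin_nonpos_of_nonpos_of_neg_pi_le (by nlinarith [Real.pi_pos])
        (by nlinarith [Real.pi_pos])
  nlinarith [mul_nonneg Real.pi_pos.le hnn]

lemma integrable_cos_mul (μ : Measure ℝ) [IsFiniteMeasure μ] (c : ℝ) :
    Integrable (fun x => Real.cos (c * x)) μ :=
  .of_bound (by fun_prop) 1 (.of_forall fun _ => Real.abs_cos_le_one _)

lemma integrable_sin_mul (μ : Measure ℝ) [IsFiniteMeasure μ] (c : ℝ) :
    Integrable (fun x => Real.sin (c * x)) μ :=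
  .of_bound (by fun_prop) 1 (.of_forall fun _ => Real.abs_sin_le_one _)

lemma integral_prod_cos_mul_sub (μ : Measure ℝ) [IsFiniteMeasure μ] (c : ℝ) :
    ∫ z, Real.cos (c * (z.1 - z.2)) ∂μ.prod μ =
      (∫ x, Real.cos (c * x) ∂μ) ^ 2 + (∫ x, Real.sin (c * x) ∂μ) ^ 2 := by
  simp_rw [mul_sub, Real.cos_sub]
  rw [integral_add ((integrable_cos_mul μ c).mul_prod (integrable_cos_mul μ c))
    ((integrable_sin_mul μ c).mul_prod (integrable_sin_mul μ c)),
    integral_prod_mul (fun x => Real.cos (c * x)) fun x => Real.cos (c * x),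
    integral_prod_mul (fun x => Real.sin (c * x)) fun x => Real.sin (c * x), sq, sq]

lemma add_two_sq_sub_one_pos (k : ℕ) : 0 < ((k : ℝ) + 2) ^ 2 - 1 := by
  nlinarith [(Nat.cast_nonneg k : (0 : ℝ) ≤ k)]

lemma aF_sq_add_bF_sq (μ : Measure ℝ) [IsFiniteMeasure μ] (k : ℕ) :
    aF μ k ^ 2 + bF μ k ^ 2 = 1 / π ^ 2 * ∫ z, Real.cos (k * (z.1 - z.2)) ∂μ.prod μ := by
  rw [integral_prod_cos_mul_sub, aF, bF]
  ring

lemma hasSum_integral_cos_div (μ : Measure ℝ) [IsProbabilityMeasure μ] :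
    HasSum (fun k : ℕ => ∫ z : ℝ × ℝ,
        Real.cos (((k : ℝ) + 2) * (z.1 - z.2)) / (((k : ℝ) + 2) ^ 2 - 1) ∂μ.prod μ)
      (∫ z : ℝ × ℝ, ∑' k : ℕ,
        Real.cos (((k : ℝ) + 2) * (z.1 - z.2)) / (((k : ℝ) + 2) ^ 2 - 1) ∂μ.prod μ) := by
  have hbd (k : ℕ) (z : ℝ × ℝ) :
      ‖Real.cos (((k : ℝ) + 2) * (z.1 - z.2)) / (((k : ℝ) + 2) ^ 2 - 1)‖ ≤
        1 / (((k : ℝ) + 2) ^ 2 - 1) := by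
    have h := add_two_sq_sub_one_pos k
    rw [norm_div, Real.norm_of_nonneg h.le]
    gcongr
    exact Real.abs_cos_le_one _
  have hint (k : ℕ) : Integrable (fun z : ℝ × ℝ =>
      Real.cos (((k : ℝ) + 2) * (z.1 - z.2)) / (((k : ℝ) + 2) ^ 2 - 1)) (μ.prod μ) :=
    .of_bound (by fun_prop) _ (.of_forall (hbd k))
  refine hasSum_integral_of_summable_integral_norm hint
    (summable_one_div_add_two_sq_sub_one.of_nonneg_of_le
      (fun k => integral_nonneg fun _ => norm_nonneg _) fun k => ?_)
  simpa using integral_mono (hint k).norm (integrable_const _) (hbd k)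

lemma hasSum_areaH_series (μ : Measure ℝ) [IsProbabilityMeasure μ] :
    HasSum (fun k : ℕ => (aF μ (k + 2) ^ 2 + bF μ (k + 2) ^ 2) / (((k : ℝ) + 2) ^ 2 - 1))
      (1 / π ^ 2 * ∫ z : ℝ × ℝ, ∑' k : ℕ,
        Real.cos (((k : ℝ) + 2) * (z.1 - z.2)) / (((k : ℝ) + 2) ^ 2 - 1) ∂μ.prod μ) := by
  refine ((hasSum_integral_cos_div μ).mul_left _).congr_fun fun k => ?_
  rw [aF_sq_add_bF_sq, integral_div, mul_div_assoc]
  push_cast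
  rfl

/-- The Hurwitz area is nonnegative (the isoperimetric positivity of `A`). -/
lemma areaH_nonneg (μ : Measure ℝ) [IsProbabilityMeasure μ]
    (h0 : ∫ x, Complex.exp (Complex.I * x) ∂μ = 0) : 0 ≤ areaH μ := by
  have hexp : Integrable (fun x : ℝ => Complex.exp (Complex.I * x)) μ := by
    refine .of_bound (by fun_prop) 1 (.of_forall fun x => ?_)
    rw [mul_comm, Complex.norm_exp_ofReal_mul_I]
  have hc : ∫ x, Real.cos (1 * x) ∂μ = 0 := by
    have h := integral_re hexp
    rw [h0] at h
    simpa [mul_comm Complex.I, Complex.exp_ofReal_mul_I_re] using h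
  have hs : ∫ x, Real.sin (1 * x) ∂μ = 0 := by
    have h := integral_im hexp
    rw [h0] at h
    simpa [mul_comm Complex.I, Complex.exp_ofReal_mul_I_im] using h
  have hone := integral_prod_cos_mul_sub μ 1
  rw [hc, hs] at hone
  simp only [one_mul] at hone
  have hcos : Integrable (fun z : ℝ × ℝ => Real.cos (z.1 - z.2)) (μ.prod μ) :=
    .of_bound (by fun_prop) 1 (.of_forall fun _ => Real.abs_cos_le_one _)
  have hle : ∫ z : ℝ × ℝ, ∑' k : ℕ,
      Real.cos (((k : ℝ) + 2) * (z.1 - z.2)) / (((k : ℝ) + 2) ^ 2 - 1) ∂μ.prod μ ≤ 1 / 2 := by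
    have hub : ∫ z : ℝ × ℝ, (1 / 2 + Real.cos (z.1 - z.2) / 4) ∂μ.prod μ = 1 / 2 := by
      rw [integral_add (integrable_const _) (hcos.div_const 4),
        integral_div 4 fun z : ℝ × ℝ => Real.cos (z.1 - z.2), hone]
      simp
    by_cases hi : Integrable (fun z : ℝ × ℝ => ∑' k : ℕ,
      Real.cos (((k : ℝ) + 2) * (z.1 - z.2)) / (((k : ℝ) + 2) ^ 2 - 1)) (μ.prod μ)
    · rw [← hub]
      exact integral_mono hi ((integrable_const _).add (hcos.div_const 4))
        fun z => tsum_cos_div_add_two_sq_sub_one_le _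
    · rw [integral_undef hi]
      norm_num
  rw [areaH, (hasSum_areaH_series μ).tsum_eq, sub_nonneg]
  calc _ ≤ π / 2 * (1 / π ^ 2 * (1 / 2)) := by gcongr
    _ = _ := by field_simp; norm_num

lemma integral_convexComb {μ ν : Measure ℝ} {f : ℝ → ℝ} (hμ : Integrable f μ)
    (hν : Integrable f ν) {l : ℝ} (hl : l ∈ Icc (0 : ℝ) 1) :
    ∫ x, f x ∂(ENNReal.ofReal l • μ + ENNReal.ofReal (1 - l) • ν) =
      l * ∫ x, f x ∂μ + (1 - l) * ∫ x, f x ∂ν := by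
  rw [integral_add_measure (hμ.smul_measure ENNReal.ofReal_ne_top)
    (hν.smul_measure ENNReal.ofReal_ne_top), integral_smul_measure, integral_smul_measure,
    ENNReal.toReal_ofReal hl.1, ENNReal.toReal_ofReal (sub_nonneg.2 hl.2), smul_eq_mul, smul_eq_mul]

/-- Cauchy–Schwarz for the two-point weights `(l, 1 - l)`. -/
lemma sq_convexComb_le {l : ℝ} (hl : l ∈ Icc (0 : ℝ) 1) (x y : ℝ) :
    (l * x + (1 - l) * y) ^ 2 ≤ l * x ^ 2 + (1 - l) * y ^ 2 := by
  have h1 : 0 ≤ 1 - l := sub_nonneg.2 hl.2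
  have h := Finset.sum_sq_le_sum_mul_sum_of_sq_le_mul Finset.univ
    (r := ![l * x, (1 - l) * y]) (f := ![l, 1 - l]) (g := ![l * x ^ 2, (1 - l) * y ^ 2])
    (by simpa [Fin.forall_fin_two] using hl)
    (by simp only [Finset.mem_univ, forall_const, Fin.forall_fin_two]
        exact ⟨mul_nonneg hl.1 (sq_nonneg x), mul_nonneg h1 (sq_nonneg y)⟩)
    (by simp only [Finset.mem_univ, forall_const, Fin.forall_fin_two]
        constructor <;> exact le_of_eq (by simp; ring))
  simpa using h

lemma areaH_concave (μ ν : Measure ℝ) [IsProbabilityMeasure μ] [IsProbabilityMeasure ν]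
    {l : ℝ} (hl : l ∈ Icc (0 : ℝ) 1) :
    l * areaH μ + (1 - l) * areaH ν ≤
      areaH (ENNReal.ofReal l • μ + ENNReal.ofReal (1 - l) • ν) := by
  set ρ := ENNReal.ofReal l • μ + ENNReal.ofReal (1 - l) • ν with hρ
  have ha (k : ℕ) : aF ρ k = l * aF μ k + (1 - l) * aF ν k := by
    rw [aF, aF, aF, hρ, integral_convexComb (integrable_cos_mul μ k) (integrable_cos_mul ν k) hl]
    ring
  have hb (k : ℕ) : bF ρ k = l * bF μ k + (1 - l) * bF ν k := by
    rw [bF, bF, bF, hρ, integral_convexComb (integrable_sin_mul μ k) (integrable_sin_mul ν k) hl]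
    ring
  have hsum := ((hasSum_areaH_series μ).summable.hasSum.mul_left l).add
    ((hasSum_areaH_series ν).summable.hasSum.mul_left (1 - l))
  have hle (k : ℕ) : (aF ρ (k + 2) ^ 2 + bF ρ (k + 2) ^ 2) / (((k : ℝ) + 2) ^ 2 - 1) ≤
      l * ((aF μ (k + 2) ^ 2 + bF μ (k + 2) ^ 2) / (((k : ℝ) + 2) ^ 2 - 1)) +
      (1 - l) * ((aF ν (k + 2) ^ 2 + bF ν (k + 2) ^ 2) / (((k : ℝ) + 2) ^ 2 - 1)) := by
    rw [ha, hb, ← mul_div_assoc, ← mul_div_assoc, ← add_div]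
    refine div_le_div_of_nonneg_right ?_ (add_two_sq_sub_one_pos k).le
    linarith [sq_convexComb_le hl (aF μ (k + 2)) (aF ν (k + 2)),
      sq_convexComb_le hl (bF μ (k + 2)) (bF ν (k + 2))]
  have hρsum := hsum.summable.of_nonneg_of_le (fun k => div_nonneg
    (add_nonneg (sq_nonneg (aF ρ (k + 2))) (sq_nonneg (bF ρ (k + 2))))
    (add_two_sq_sub_one_pos k).le) hle
  have hts := hρsum.tsum_le_tsum hle hsum.summable
  rw [hsum.tsum_eq] at hts
  have := mul_le_mul_of_nonneg_left hts (by positivity : 0 ≤ π / 2)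
  simp only [areaH]
  linarith

theorem stmt12 (μ ν : Measure ℝ) [IsProbabilityMeasure μ] [IsProbabilityMeasure ν]
    (hμs : μ (Set.Ico 0 (2*π))ᶜ = 0) (hνs : ν (Set.Ico 0 (2*π))ᶜ = 0)
    (hμ0 : ∫ x, Complex.exp (Complex.I * x) ∂μ = 0)
    (hν0 : ∫ x, Complex.exp (Complex.I * x) ∂ν = 0)
    (l : ℝ) (hl : l ∈ Set.Icc (0:ℝ) 1) :
    l * Real.sqrt (areaH μ) + (1-l) * Real.sqrt (areaH ν) ≤
      Real.sqrt (areaH (ENNReal.ofReal l • μ + ENNReal.ofReal (1-l) • ν))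
    ∧ min (areaH μ) (areaH ν) ≤ areaH (ENNReal.ofReal l • μ + ENNReal.ofReal (1-l) • ν) := by
  have hconc := areaH_concave μ ν hl
  have h1 : 0 ≤ 1 - l := sub_nonneg.2 hl.2
  constructor
  · refine Real.le_sqrt_of_sq_le ((sq_convexComb_le hl _ _).trans ?_)
    rwa [Real.sq_sqrt (areaH_nonneg μ hμ0), Real.sq_sqrt (areaH_nonneg ν hν0)]
  · refine le_trans ?_ hconc
    nlinarith [mul_le_mul_of_nonneg_left (min_le_left (areaH μ) (areaH ν)) hl.1,
      mul_le_mul_of_nonneg_left (min_le_right (areaH μ) (areaH ν)) h1]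
end
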